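/- The intersection of the Markov spectrum M with the open interval (4√210/19, (74613+4096√210)/43449) consists of exactly one point, namely √85/3, which is therefore an isolated point of M. Moreover, both endpoints 4√210/19 and (74613+4096√210)/43449 belong to M. -/

import Mathlib

open Filter Set MeasureTheory
open scoped ENNReal

/-- Finite continued fraction `[a 0; a 1, ..., a n]`. -/
noncomputable def cfConv : (ℕ → ℝ) → ℕ → ℝ
  | a, 0 => a 0
  | a, n + 1 => a 0 + 1 / cfConv (fun i => a (i + 1)) n

/-- Value of the infinite continued fraction `[a 0; a 1, a 2, ...]`,
as the limit of its convergents. -/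
noncomputable def cfVal (a : ℕ → ℝ) : ℝ := limUnder atTop (cfConv a)

/-- `λ_k(α) = [α_k; α_{k+1}, ...] + [0; α_{k-1}, α_{k-2}, ...]`. -/
noncomputable def lambdaVal (α : ℤ → ℕ) (k : ℤ) : ℝ :=
  cfVal (fun n => (α (k + n) : ℝ)) +
  cfVal (fun n => if n = 0 then 0 else (α (k - n) : ℝ))

/-- The Markov value `m(α) = sup_{k ∈ ℤ} λ_k(α)`. -/
noncomputable def markovValue (α : ℤ → ℕ) : ℝ := ⨆ k : ℤ, lambdaVal α k

/-- The Markov spectrum. -/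
def markovSpectrum : Set ℝ :=
  { x | ∃ α : ℤ → ℕ, (∀ n, 0 < α n) ∧ BddAbove (range (lambdaVal α)) ∧
      markovValue α = x }

/-- The dimension function `d(t) = dim_H (M ∩ (-∞, t))`. -/
noncomputable def dimFun (t : ℝ) : ℝ≥0∞ := dimH (markovSpectrum ∩ Iio t)

/-!
Sequences of Markov value below `3.1` are over `{1, 2}` and avoid `121`, `22212` and `21222`. In
such a sequence the tail following a digit `1` is smallest when it is purely periodic with period
`222111`, and this extremal tail bounds `λ_k` by `4√210/19` at every position that is not an end of
a word `212`. A Markov value exceeding the lower endpoint therefore forces an occurrence of `212`.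
If the value also stays below the upper endpoint, comparing the two sides of the palindrome
`112212212211` shows that `212` repeats three places further, in both directions, so that the
sequence has period `212` and Markov value `√85/3`.
-/

/-! ### Infinite continued fractions -/

section ContinuedFractions

variable {a : ℕ → ℝ}

lemma one_le_cfConv (ha : ∀ i, 1 ≤ a i) (n : ℕ) : 1 ≤ cfConv a n := by
  induction n generalizing a with
  | zero => exact ha 0
  | succ n ih =>
    have htail := ih fun i => ha (i + 1)
    exact le_add_of_le_of_nonneg (ha 0) (by positivity)

lemma abs_one_div_add_one_div_sub_le {b x y : ℝ} (hb : 1 ≤ b) (hx : 1 ≤ x) (hy : 1 ≤ y) :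
    |1 / (b + 1 / x) - 1 / (b + 1 / y)| ≤ |x - y| / 4 := by
  have hbx : 2 ≤ b * x + 1 := by nlinarith
  have hby : 2 ≤ b * y + 1 := by nlinarith
  have hsub : 1 / (b + 1 / x) - 1 / (b + 1 / y) = (x - y) / ((b * x + 1) * (b * y + 1)) := by
    field_simp
    ring
  rw [hsub, abs_div, abs_of_pos (by positivity : 0 < (b * x + 1) * (b * y + 1))]
  gcongr
  nlinarith

lemma abs_cfConv_add_sub_cfConv_le (ha : ∀ i, 1 ≤ a i) (n m : ℕ) :
    |cfConv a (m + 2 * n) - cfConv a (2 * n)| ≤ (1 / 4) ^ n := by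
  induction n generalizing a with
  | zero =>
    cases m with
    | zero => simp
    | succ m =>
      have htail := one_le_cfConv (fun i => ha (i + 1)) m
      rw [mul_zero, add_zero, cfConv, cfConv, add_sub_cancel_left, pow_zero,
        abs_of_pos (by positivity)]
      exact (div_le_one (by positivity)).2 htail
  | succ n ih =>
    have htail : ∀ i, 1 ≤ a (i + 1 + 1) := fun i => ha _
    calc |cfConv a (m + 2 * n + 1 + 1) - cfConv a (2 * n + 1 + 1)|
        ≤ |cfConv (fun i => a (i + 1 + 1)) (m + 2 * n) -
            cfConv (fun i => a (i + 1 + 1)) (2 * n)| / 4 := by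
          simp only [cfConv, add_sub_add_left_eq_sub]
          exact abs_one_div_add_one_div_sub_le (ha _) (one_le_cfConv htail _)
            (one_le_cfConv htail _)
      _ ≤ (1 / 4) ^ n / 4 := by gcongr; exact ih htail
      _ = (1 / 4) ^ (n + 1) := by ring

lemma tendsto_cfConv_cfVal (ha : ∀ i, 1 ≤ a i) :
    Tendsto (cfConv a) atTop (nhds (cfVal a)) := by
  refine CauchySeq.tendsto_limUnder (Metric.cauchySeq_iff'.2 fun ε hε => ?_)
  obtain ⟨n, hn⟩ := exists_pow_lt_of_lt_one hε (by norm_num : (1 / 4 : ℝ) < 1)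
  refine ⟨2 * n, fun m hm => ?_⟩
  obtain ⟨d, rfl⟩ := Nat.exists_eq_add_of_le' hm
  exact (abs_cfConv_add_sub_cfConv_le ha n d).trans_lt hn

lemma one_le_cfVal (ha : ∀ i, 1 ≤ a i) : 1 ≤ cfVal a :=
  ge_of_tendsto' (tendsto_cfConv_cfVal ha) (one_le_cfConv ha)

lemma cfVal_eq_add_one_div (ha : ∀ i, 1 ≤ a (i + 1)) :
    cfVal a = a 0 + 1 / cfVal (fun i => a (i + 1)) := by
  have htail := one_le_cfVal ha
  have hlim : Tendsto (fun n => cfConv a (n + 1)) atTop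
      (nhds (a 0 + 1 / cfVal (fun i => a (i + 1)))) :=
    tendsto_const_nhds.add (tendsto_const_nhds.div (tendsto_cfConv_cfVal ha) (by positivity))
  exact ((tendsto_add_atTop_iff_nat 1).1 hlim).limUnder_eq

end ContinuedFractions

/-- The finite continued fraction `[0; w₀, …, wₙ₋₂, wₙ₋₁ + x]`, that is, the digits `w` followed by
the tail `x`. -/
noncomputable def cfPrepend : List ℕ → ℝ → ℝ
  | [], x => x
  | d :: w, x => 1 / (d + cfPrepend w x)

section Prepend

variable {w : List ℕ} {d : ℕ} {x y : ℝ}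

lemma cfPrepend_pos (hx : 0 < x) : 0 < cfPrepend w x := by
  induction w with
  | nil => exact hx
  | cons d w ih => rw [cfPrepend]; positivity

lemma cfPrepend_cons_le (hd : 0 < d) (hx : 0 < x) : cfPrepend (d :: w) x ≤ 1 / d := by
  have htail : 0 < cfPrepend w x := cfPrepend_pos hx
  rw [cfPrepend]
  gcongr
  linarith

lemma cfPrepend_mono_and_anti (hx : 0 < x) (hxy : x ≤ y) (w : List ℕ) :
    (Even w.length → cfPrepend w x ≤ cfPrepend w y) ∧
      (Odd w.length → cfPrepend w y ≤ cfPrepend w x) := by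
  induction w with
  | nil => simpa [cfPrepend] using hxy
  | cons d w ih =>
    have htail_x : 0 < cfPrepend w x := cfPrepend_pos hx
    have htail_y : 0 < cfPrepend w y := cfPrepend_pos (hx.trans_le hxy)
    simp only [cfPrepend, List.length_cons, Nat.even_add_one, Nat.odd_add_one, Nat.not_even_iff_odd,
      Nat.not_odd_iff_even]
    refine ⟨fun hw => ?_, fun hw => ?_⟩
    · have := ih.2 hw
      gcongr
    · have := ih.1 hw
      gcongr

lemma cfPrepend_le_cfPrepend_of_even (hw : Even w.length) (hx : 0 < x) (hxy : x ≤ y) :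
    cfPrepend w x ≤ cfPrepend w y :=
  (cfPrepend_mono_and_anti hx hxy w).1 hw

lemma cfPrepend_le_cfPrepend_of_odd (hw : Odd w.length) (hx : 0 < x) (hxy : x ≤ y) :
    cfPrepend w y ≤ cfPrepend w x :=
  (cfPrepend_mono_and_anti hx hxy w).2 hw

end Prepend

/-! ### Words in bi-infinite sequences -/

/-- The word `w` occurs in `α` at position `k`, that is, `α_k α_{k+1} ⋯` begins with `w`. -/
def OccursAt : List ℕ → (ℤ → ℕ) → ℤ → Prop
  | [], _, _ => True
  | d :: w, α, k => α k = d ∧ OccursAt w α (k + 1)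

/-- The sequence read backwards; the reflection `k ↦ -1 - k` exchanges the nonnegative and the
negative positions, so that a cut just before position `k` becomes a cut just before `-k`. -/
def reverseSeq (α : ℤ → ℕ) (k : ℤ) : ℕ := α (-1 - k)

/-- The value `[0; α_k, α_{k+1}, …]`. -/
noncomputable def forwardTail (α : ℤ → ℕ) (k : ℤ) : ℝ := 1 / cfVal fun n => α (k + n)

/-- The value `[0; α_{k-1}, α_{k-2}, …]`, complementary to `forwardTail α k`. -/
noncomputable def backwardTail (α : ℤ → ℕ) (k : ℤ) : ℝ := 1 / cfVal fun n => α (k - 1 - n)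

section Words

variable {α β : ℤ → ℕ} {k l : ℤ} {u v w : List ℕ}

lemma occursAt_append :
    OccursAt (u ++ v) α k ↔ OccursAt u α k ∧ OccursAt v α (k + u.length) := by
  induction u generalizing k with
  | nil => simp [OccursAt]
  | cons d u ih =>
    simp only [List.cons_append, OccursAt, ih, and_assoc, List.length_cons, Nat.cast_add,
      Nat.cast_one, add_assoc, add_comm (1 : ℤ)]

@[simp]
lemma reverseSeq_reverseSeq (α : ℤ → ℕ) : reverseSeq (reverseSeq α) = α := by
  funext k
  simp [reverseSeq]

lemma OccursAt.reverse (hw : OccursAt w α k) :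
    OccursAt w.reverse (reverseSeq α) (-(k + w.length)) := by
  induction w generalizing k with
  | nil => trivial
  | cons d w ih =>
    obtain ⟨hd, hw⟩ := hw
    rw [List.reverse_cons, occursAt_append, List.length_reverse, List.length_cons, Nat.cast_add,
      Nat.cast_one, add_comm (w.length : ℤ), ← add_assoc]
    refine ⟨ih hw, ?_, trivial⟩
    rw [← hd, reverseSeq]
    congr 1
    ring

lemma OccursAt.of_reverseSeq (hw : OccursAt w (reverseSeq α) k) :
    OccursAt w.reverse α (-(k + w.length)) := by
  simpa only [reverseSeq_reverseSeq] using hw.reverse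

lemma forwardTail_congr (h : ∀ n : ℕ, α (k + n) = β (l + n)) :
    forwardTail α k = forwardTail β l := by
  simp only [forwardTail, h]

lemma forwardTail_reverseSeq (α : ℤ → ℕ) (k : ℤ) :
    forwardTail (reverseSeq α) k = backwardTail α (-k) := by
  simp only [forwardTail, backwardTail, reverseSeq]
  congr! 5
  ring

lemma backwardTail_reverseSeq (α : ℤ → ℕ) (k : ℤ) :
    backwardTail (reverseSeq α) k = forwardTail α (-k) := by
  rw [← neg_neg k, ← forwardTail_reverseSeq, reverseSeq_reverseSeq, neg_neg]

lemma backwardTail_eq_of_symmetric (hsymm : reverseSeq α = α) (k : ℤ) :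
    backwardTail α k = forwardTail α (-k) := by
  rw [← backwardTail_reverseSeq, hsymm]

lemma periodic_forwardTail {c : ℤ} (hper : Function.Periodic α c) :
    Function.Periodic (forwardTail α) c := fun k =>
  forwardTail_congr fun n => by rw [add_right_comm, hper]

lemma lambdaVal_shift (α : ℤ → ℕ) (c k : ℤ) :
    lambdaVal (fun j => α (j + c)) k = lambdaVal α (k + c) := by
  simp only [lambdaVal, add_right_comm k c, sub_add_eq_add_sub]

lemma markovValue_shift (α : ℤ → ℕ) (c : ℤ) :
    markovValue (fun j => α (j + c)) = markovValue α := by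
  simp only [markovValue, lambdaVal_shift]
  exact (Equiv.addRight c).iSup_comp

lemma periodic_lambdaVal {c : ℤ} (hper : Function.Periodic α c) :
    Function.Periodic (lambdaVal α) c := fun k => by
  rw [← lambdaVal_shift, funext hper]

section Positive

variable (hα : ∀ k, 0 < α k)
include hα

lemma forwardTail_pos (k : ℤ) : 0 < forwardTail α k := by
  have := one_le_cfVal (a := fun n => (α (k + n) : ℝ)) fun n => by exact_mod_cast hα _
  unfold forwardTail
  positivity

lemma backwardTail_pos (k : ℤ) : 0 < backwardTail α k := by
  simpa [forwardTail_reverseSeq] using forwardTail_pos (α := reverseSeq α) (fun _ => hα _) (-k)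

lemma forwardTail_eq (k : ℤ) : forwardTail α k = 1 / (α k + forwardTail α (k + 1)) := by
  rw [forwardTail, cfVal_eq_add_one_div fun n => by exact_mod_cast hα _]
  simp only [forwardTail, Nat.cast_zero, add_zero, Nat.cast_add, Nat.cast_one, add_assoc,
    add_comm (1 : ℤ)]

lemma lambdaVal_eq (k : ℤ) :
    lambdaVal α k = α k + forwardTail α (k + 1) + backwardTail α k := by
  have hback : ∀ n : ℕ, (1 : ℝ) ≤ if n + 1 = 0 then 0 else (α (k - (n + 1 : ℕ)) : ℝ) := fun n => by
    simpa using Nat.one_le_iff_ne_zero.2 (hα _).ne'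
  rw [lambdaVal, cfVal_eq_add_one_div fun n => by exact_mod_cast hα _,
    cfVal_eq_add_one_div (a := fun n => if n = 0 then 0 else (α (k - n) : ℝ)) hback]
  simp only [forwardTail, backwardTail, Nat.cast_zero, add_zero, Nat.cast_add, Nat.cast_one,
    if_true, zero_add, Nat.succ_ne_zero, if_false, add_assoc, sub_sub, add_comm (1 : ℤ)]

lemma lambdaVal_reverseSeq (k : ℤ) : lambdaVal (reverseSeq α) k = lambdaVal α (-1 - k) := by
  rw [lambdaVal_eq hα, lambdaVal_eq (α := reverseSeq α) fun _ => hα _, forwardTail_reverseSeq,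
    backwardTail_reverseSeq, reverseSeq, show -(k + 1) = -1 - k by ring,
    show -k = -1 - k + 1 by ring]
  ring

lemma lambdaVal_reflect (hsymm : reverseSeq α = α) (k : ℤ) :
    lambdaVal α (-1 - k) = lambdaVal α k := by
  rw [← lambdaVal_reverseSeq hα, hsymm]

lemma forwardTail_eq_cfPrepend (hw : OccursAt w α k) :
    forwardTail α k = cfPrepend w (forwardTail α (k + w.length)) := by
  induction w generalizing k with
  | nil => simp [cfPrepend]
  | cons d w ih =>
    obtain ⟨hd, hw⟩ := hw
    rw [forwardTail_eq hα, hd, ih hw, cfPrepend, List.length_cons, Nat.cast_add, Nat.cast_one,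
      add_comm (w.length : ℤ), ← add_assoc]

lemma cfPrepend_forwardTail_of_periodic (hper : Function.Periodic α w.length)
    (hw : OccursAt w α k) : cfPrepend w (forwardTail α k) = forwardTail α k := by
  conv_rhs => rw [forwardTail_eq_cfPrepend hα hw, periodic_forwardTail hper]

lemma backwardTail_eq_cfPrepend (hw : OccursAt w α k) :
    backwardTail α (k + w.length) = cfPrepend w.reverse (backwardTail α k) := by
  simpa [forwardTail_reverseSeq] using
    forwardTail_eq_cfPrepend (α := reverseSeq α) (fun _ => hα _) hw.reverse

lemma lambdaVal_eq_of_occursAt (u : List ℕ) (d : ℕ) (v : List ℕ)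
    (hw : OccursAt (u ++ d :: v) α k) :
    lambdaVal α (k + u.length) = d + cfPrepend v (forwardTail α (k + (u ++ d :: v).length)) +
      cfPrepend u.reverse (backwardTail α k) := by
  obtain ⟨hu, hd, hv⟩ := occursAt_append.1 hw
  have hlen : k + (u ++ d :: v).length = k + u.length + 1 + v.length := by
    rw [List.length_append, List.length_cons]
    push_cast
    ring
  rw [lambdaVal_eq hα, hd, forwardTail_eq_cfPrepend hα hv, backwardTail_eq_cfPrepend hα hu, hlen]

lemma forwardTail_le_one_div (k : ℤ) : forwardTail α k ≤ 1 / α k := by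
  have hdigit : (0 : ℝ) < α k := by exact_mod_cast hα k
  rw [forwardTail_eq hα]
  gcongr
  linarith [forwardTail_pos hα (k + 1)]

lemma forwardTail_le_one (k : ℤ) : forwardTail α k ≤ 1 :=
  (forwardTail_le_one_div hα k).trans <| div_le_one_of_le₀ (by exact_mod_cast hα k) (by positivity)

lemma one_div_add_one_le_forwardTail (k : ℤ) : 1 / (α k + 1) ≤ forwardTail α k := by
  have := forwardTail_pos hα (k + 1)
  rw [forwardTail_eq hα]
  gcongr
  exact forwardTail_le_one hα (k + 1)

lemma one_div_add_one_le_backwardTail (k : ℤ) : 1 / (α (k - 1) + 1) ≤ backwardTail α k := by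
  have := one_div_add_one_le_forwardTail (α := reverseSeq α) (fun _ => hα _) (-k)
  rwa [forwardTail_reverseSeq, neg_neg, reverseSeq, show -1 - -k = k - 1 by ring] at this

lemma forwardTail_mem_Icc (hle : ∀ k, α k ≤ 2) (k : ℤ) :
    forwardTail α k ∈ Icc (1 / 3) (3 / 4) := by
  have lower (j : ℤ) : 1 / 3 ≤ forwardTail α j := by
    have hdigit : (α j : ℝ) ≤ 2 := by exact_mod_cast hle j
    refine le_trans ?_ (one_div_add_one_le_forwardTail hα j)
    gcongr
    linarith
  refine ⟨lower k, ?_⟩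
  have hdigit : (1 : ℝ) ≤ α k := by exact_mod_cast hα k
  rw [forwardTail_eq hα, div_le_iff₀ (by linarith [lower (k + 1)])]
  linarith [lower (k + 1)]

lemma backwardTail_mem_Icc (hle : ∀ k, α k ≤ 2) (k : ℤ) :
    backwardTail α k ∈ Icc (1 / 3) (3 / 4) := by
  simpa [forwardTail_reverseSeq] using
    forwardTail_mem_Icc (α := reverseSeq α) (fun _ => hα _) (fun _ => hle _) (-k)

end Positive

end Words

/-! ### Admissible sequences -/

/-- Sequences over `{1, 2}` avoiding the words `121`, `22212` and its reversal `21222`. These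
restrictions hold for all sequences of Markov value below `3.1`. -/
structure Admissible (α : ℤ → ℕ) : Prop where
  digit : ∀ k, α k = 1 ∨ α k = 2
  not_121 : ∀ k, ¬OccursAt [1, 2, 1] α k
  not_22212 : ∀ k, ¬OccursAt [2, 2, 2, 1, 2] α k
  not_21222 : ∀ k, ¬OccursAt [2, 1, 2, 2, 2] α k

section OfSmallMarkovValue

variable {α : ℤ → ℕ} {k : ℤ}

lemma digit_le_two_of_lambdaVal_lt (hα : ∀ k, 0 < α k) (hlt : lambdaVal α k < 31 / 10)
    (hle : ∀ j, α j ≤ 3) : α k ≤ 2 := by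
  by_contra! hk
  have hk3 : (α k : ℝ) = 3 := by exact_mod_cast le_antisymm (hle k) hk
  have quarter (j : ℤ) : (1 / 4 : ℝ) ≤ 1 / (α j + 1) := by
    have : (α j : ℝ) ≤ 3 := by exact_mod_cast hle j
    gcongr
    linarith
  rw [lambdaVal_eq hα, hk3] at hlt
  linarith [quarter (k + 1), quarter (k - 1), one_div_add_one_le_forwardTail hα (k + 1),
    one_div_add_one_le_backwardTail hα k]

lemma digit_of_lambdaVal_lt (hα : ∀ k, 0 < α k) (hlt : ∀ k, lambdaVal α k < 31 / 10) (k : ℤ) :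
    α k = 1 ∨ α k = 2 := by
  have hle (j : ℤ) : α j ≤ 3 := by
    have hj := hlt j
    rw [lambdaVal_eq hα] at hj
    have : (α j : ℝ) < 4 := by linarith [forwardTail_pos hα (j + 1), backwardTail_pos hα j]
    exact Nat.lt_succ_iff.1 (by exact_mod_cast this)
  have := digit_le_two_of_lambdaVal_lt hα (hlt k) hle
  have := hα k
  omega

lemma le_lambdaVal_of_121 (hα : ∀ k, 0 < α k) (hle : ∀ k, α k ≤ 2)
    (hw : OccursAt [1, 2, 1] α k) : 31 / 10 ≤ lambdaVal α (k + 1) := by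
  have hval : lambdaVal α (k + 1) =
      2 + cfPrepend [1] (forwardTail α (k + 3)) + cfPrepend [1] (backwardTail α k) := by
    simpa using lambdaVal_eq_of_occursAt hα [1] 2 [1] hw
  have hforward := cfPrepend_le_cfPrepend_of_odd (w := [1]) (by decide)
    (forwardTail_pos hα (k + 3)) (forwardTail_mem_Icc hα hle _).2
  have hback := cfPrepend_le_cfPrepend_of_odd (w := [1]) (by decide)
    (backwardTail_pos hα k) (backwardTail_mem_Icc hα hle _).2
  have hnum : cfPrepend [1] (3 / 4) = 4 / 7 := by norm_num [cfPrepend]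
  linarith

lemma le_lambdaVal_of_22212 (hα : ∀ k, 0 < α k) (hle : ∀ k, α k ≤ 2)
    (hw : OccursAt [2, 2, 2, 1, 2] α k) : 31 / 10 ≤ lambdaVal α (k + 2) := by
  have hval : lambdaVal α (k + 2) =
      2 + cfPrepend [1, 2] (forwardTail α (k + 5)) + cfPrepend [2, 2] (backwardTail α k) := by
    simpa using lambdaVal_eq_of_occursAt hα [2, 2] 2 [1, 2] hw
  have hforward := cfPrepend_le_cfPrepend_of_even (w := [1, 2]) (by decide) (by norm_num)
    (forwardTail_mem_Icc hα hle (k + 5)).1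
  have hback := cfPrepend_le_cfPrepend_of_even (w := [2, 2]) (by decide) (by norm_num)
    (backwardTail_mem_Icc hα hle k).1
  have hnum : cfPrepend [1, 2] (1 / 3) + cfPrepend [2, 2] (1 / 3) = 7 / 10 + 7 / 17 := by
    norm_num [cfPrepend]
  linarith

lemma admissible_of_lambdaVal_lt (hα : ∀ k, 0 < α k) (hlt : ∀ k, lambdaVal α k < 31 / 10) :
    Admissible α := by
  have hdigit := digit_of_lambdaVal_lt hα hlt
  have hle (k : ℤ) : α k ≤ 2 := by have := hdigit k; omega
  refine ⟨hdigit, fun k hw => ?_, fun k hw => ?_, fun k hw => ?_⟩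
  · exact (hlt _).not_ge (le_lambdaVal_of_121 hα hle hw)
  · exact (hlt _).not_ge (le_lambdaVal_of_22212 hα hle hw)
  · have := le_lambdaVal_of_22212 (α := reverseSeq α) (fun _ => hα _) (fun _ => hle _)
      hw.reverse
    rw [lambdaVal_reverseSeq hα] at this
    exact (hlt _).not_ge this

end OfSmallMarkovValue

namespace Admissible

variable {α : ℤ → ℕ} {k : ℤ}

lemma pos (h : Admissible α) (k : ℤ) : 0 < α k := by
  have := h.digit k
  omega

lemma le_two (h : Admissible α) (k : ℤ) : α k ≤ 2 := by
  have := h.digit k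
  omega

lemma reverse (h : Admissible α) : Admissible (reverseSeq α) where
  digit _ := h.digit _
  not_121 _ hw := h.not_121 _ hw.of_reverseSeq
  not_22212 _ hw := h.not_21222 _ hw.of_reverseSeq
  not_21222 _ hw := h.not_22212 _ hw.of_reverseSeq

lemma forwardTail_le_three_quarters (h : Admissible α) (k : ℤ) : forwardTail α k ≤ 3 / 4 :=
  (forwardTail_mem_Icc h.pos h.le_two k).2

lemma backwardTail_le_three_quarters (h : Admissible α) (k : ℤ) : backwardTail α k ≤ 3 / 4 :=
  (backwardTail_mem_Icc h.pos h.le_two k).2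

lemma half_le_forwardTail (h : Admissible α) (hk : α k = 1) : 1 / 2 ≤ forwardTail α k := by
  simpa [hk, one_add_one_eq_two] using one_div_add_one_le_forwardTail h.pos k

lemma forwardTail_le_half (h : Admissible α) (hk : α k = 2) : forwardTail α k ≤ 1 / 2 := by
  simpa [hk] using forwardTail_le_one_div h.pos k

lemma occursAt_21221 (h : Admissible α) (hw : OccursAt [2, 1, 2] α k) :
    OccursAt [2, 1, 2, 2, 1] α k := by
  have hdigit := h.digit
  have h121 := h.not_121 (k + 1)
  have h21222 := h.not_21222 k
  grind [OccursAt]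

end Admissible

/-! ### Extremal tails -/

/-- The value of `[0; 2, 2, 2, 1, 1, 1, …]` with period `222111`, which turns out to be the smallest
tail that can follow a digit `1` in an admissible sequence. -/
noncomputable def minTail : ℝ := (2 * √210 - 17) / 29

lemma sqrt_210_mem_Ioo : √210 ∈ Ioo 14.49 14.4914 :=
  ⟨Real.lt_sqrt_of_sq_lt (by norm_num), (Real.sqrt_lt' (by norm_num)).2 (by norm_num)⟩

lemma sq_sqrt_210 : √210 ^ 2 = 210 := Real.sq_sqrt (by norm_num)

lemma minTail_pos : 0 < minTail := by
  have := sqrt_210_mem_Ioo.1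
  exact div_pos (by linarith) (by norm_num)

lemma minTail_le_one : minTail ≤ 1 := by
  have := sqrt_210_mem_Ioo.2
  exact (div_le_one (by norm_num)).2 (by linarith)

lemma cfPrepend_222111 {x : ℝ} (hx : 0 < x) :
    cfPrepend [2, 2, 2, 1, 1, 1] x = (19 + 12 * x) / (46 + 29 * x) := by
  simp only [cfPrepend, Nat.cast_ofNat, Nat.cast_one]
  field_simp
  ring

lemma minTail_le_of_cfPrepend_le {x : ℝ} (hx : 0 < x)
    (hle : cfPrepend [2, 2, 2, 1, 1, 1] x ≤ x) : minTail ≤ x := by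
  rw [cfPrepend_222111 hx, div_le_iff₀ (by positivity)] at hle
  have hsqrt : 2 * √210 ≤ 29 * x + 17 :=
    le_of_sq_le_sq (by nlinarith [sq_sqrt_210]) (by positivity)
  rw [minTail, div_le_iff₀ (by norm_num)]
  linarith

lemma eq_minTail_of_cfPrepend_eq {x : ℝ} (hx : 0 < x)
    (heq : cfPrepend [2, 2, 2, 1, 1, 1] x = x) : x = minTail := by
  rw [cfPrepend_222111 hx, div_eq_iff (by positivity)] at heq
  have hsqrt : 2 * √210 = 29 * x + 17 :=
    (sq_eq_sq₀ (by positivity) (by positivity)).1 (by linarith [sq_sqrt_210])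
  rw [minTail, hsqrt]
  ring

namespace Admissible

variable {α : ℤ → ℕ} {k : ℤ} {x : ℝ}

lemma forwardTail_le_cfPrepend_of_forall_le (h : Admissible α) (hx : 0 < x) (hx1 : x ≤ 1)
    (hmin : ∀ j, α j = 1 → x ≤ forwardTail α (j + 1)) (k : ℤ) :
    forwardTail α k ≤ cfPrepend [1] x := by
  rcases h.digit k with hk | hk
  · rw [forwardTail_eq_cfPrepend h.pos (w := [1]) ⟨hk, trivial⟩]
    exact cfPrepend_le_cfPrepend_of_odd (by decide) hx (hmin k hk)
  · calc forwardTail α k ≤ 1 / 2 := h.forwardTail_le_half hk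
      _ = cfPrepend [1] 1 := by norm_num [cfPrepend]
      _ ≤ cfPrepend [1] x := cfPrepend_le_cfPrepend_of_odd (by decide) hx hx1

lemma forwardTail_le_cfPrepend_of_222 (h : Admissible α)
    (hmax : ∀ j, forwardTail α j ≤ x) (hw : OccursAt [2, 2, 2] α k) :
    forwardTail α (k + 3) ≤ cfPrepend [1, 1] x := by
  have hx : 0 < x := (forwardTail_pos h.pos k).trans_le (hmax k)
  rcases h.digit (k + 3) with hk | hk
  · have hw' : OccursAt [1, 1] α (k + 3) := by
      have := h.not_22212 k
      have := h.digit (k + 4)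
      grind [OccursAt]
    rw [forwardTail_eq_cfPrepend h.pos hw']
    exact cfPrepend_le_cfPrepend_of_even (by decide) (forwardTail_pos h.pos _) (hmax _)
  · refine (h.forwardTail_le_half hk).trans ?_
    simp only [cfPrepend, Nat.cast_one]
    rw [div_le_div_iff₀ (by norm_num) (by positivity)]
    linarith [(div_le_one (by positivity)).2 (by linarith : 1 ≤ 1 + x)]

lemma cfPrepend_le_forwardTail_of_22 (h : Admissible α) (hx : 0 < x)
    (hmax : ∀ j, OccursAt [2, 2, 2] α j → forwardTail α (j + 3) ≤ x)
    (hw : OccursAt [2, 2] α k) : cfPrepend [2] x ≤ forwardTail α (k + 2) := by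
  rcases h.digit (k + 2) with hk | hk
  · exact (cfPrepend_cons_le (by norm_num) hx).trans (h.half_le_forwardTail hk)
  · have hmax' : forwardTail α (k + 2 + 1) ≤ x := by
      simpa [add_assoc] using hmax k (by grind [OccursAt])
    rw [forwardTail_eq_cfPrepend h.pos (w := [2]) ⟨hk, trivial⟩]
    exact cfPrepend_le_cfPrepend_of_odd (by decide) (forwardTail_pos h.pos _) hmax'

lemma cfPrepend_le_forwardTail_of_one (h : Admissible α) (hx : 0 < x)
    (hmax : ∀ j, OccursAt [2, 2, 2] α j → forwardTail α (j + 3) ≤ x) (hk : α k = 1) :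
    cfPrepend [2, 2, 2] x ≤ forwardTail α (k + 1) := by
  rcases h.digit (k + 1) with hk' | hk'
  · exact (cfPrepend_cons_le (by norm_num) hx).trans (h.half_le_forwardTail hk')
  · have hw : OccursAt [2, 2] α (k + 1) := by
      have := h.not_121 k
      have := h.digit (k + 2)
      grind [OccursAt]
    rw [forwardTail_eq_cfPrepend h.pos hw]
    exact cfPrepend_le_cfPrepend_of_even (w := [2, 2]) (x := cfPrepend [2] x) (by decide)
      (cfPrepend_pos hx) (h.cfPrepend_le_forwardTail_of_22 hx hmax hw)

lemma cfPrepend_222111_le_forwardTail (h : Admissible α) (hx : 0 < x) (hx1 : x ≤ 1)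
    (hmin : ∀ j, α j = 1 → x ≤ forwardTail α (j + 1)) (hk : α k = 1) :
    cfPrepend [2, 2, 2, 1, 1, 1] x ≤ forwardTail α (k + 1) :=
  h.cfPrepend_le_forwardTail_of_one (x := cfPrepend [1, 1, 1] x) (cfPrepend_pos hx)
    (fun _ => h.forwardTail_le_cfPrepend_of_222
      (h.forwardTail_le_cfPrepend_of_forall_le hx hx1 hmin)) hk

/- The infimum `q` of the tails following a `1` satisfies `[0; 2, 2, 2, 1, 1, 1 + q] ≤ q`, and
`minTail` is the positive fixed point of `x ↦ [0; 2, 2, 2, 1, 1, 1 + x]`. -/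
lemma minTail_le_forwardTail (h : Admissible α) (hk : α k = 1) :
    minTail ≤ forwardTail α (k + 1) := by
  set q := ⨅ j : {j // α j = 1}, forwardTail α (j + 1)
  have : Nonempty {j // α j = 1} := ⟨k, hk⟩
  have hlower (j : ℤ) : 1 / 3 ≤ forwardTail α j := (forwardTail_mem_Icc h.pos h.le_two j).1
  have hq (j : ℤ) (hj : α j = 1) : q ≤ forwardTail α (j + 1) :=
    ciInf_le (f := fun j : {j // α j = 1} => forwardTail α (j + 1))
      ⟨1 / 3, forall_mem_range.2 fun _ => hlower _⟩ ⟨j, hj⟩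
  have hq_pos : 0 < q := lt_of_lt_of_le (by norm_num) (le_ciInf fun _ => hlower _)
  have hq_le_one : q ≤ 1 := (hq k hk).trans (forwardTail_le_one h.pos _)
  have hstep : cfPrepend [2, 2, 2, 1, 1, 1] q ≤ q :=
    le_ciInf fun j => h.cfPrepend_222111_le_forwardTail hq_pos hq_le_one hq j.2
  exact (minTail_le_of_cfPrepend_le hq_pos hstep).trans (hq k hk)

lemma forwardTail_le (h : Admissible α) (k : ℤ) : forwardTail α k ≤ cfPrepend [1] minTail :=
  h.forwardTail_le_cfPrepend_of_forall_le minTail_pos minTail_le_one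
    (fun _ => h.minTail_le_forwardTail) k

lemma backwardTail_le (h : Admissible α) (k : ℤ) : backwardTail α k ≤ cfPrepend [1] minTail := by
  simpa [forwardTail_reverseSeq] using h.reverse.forwardTail_le (-k)

lemma le_forwardTail_of_22 (h : Admissible α) (hw : OccursAt [2, 2] α k) :
    cfPrepend [2, 1, 1, 1] minTail ≤ forwardTail α (k + 2) :=
  h.cfPrepend_le_forwardTail_of_22 (x := cfPrepend [1, 1, 1] minTail) (cfPrepend_pos minTail_pos)
    (fun _ => h.forwardTail_le_cfPrepend_of_222 h.forwardTail_le) hw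

lemma le_backwardTail_of_22 (h : Admissible α) (hw : OccursAt [2, 2] α k) :
    cfPrepend [2, 1, 1, 1] minTail ≤ backwardTail α k := by
  simpa [forwardTail_reverseSeq] using h.reverse.le_forwardTail_of_22 hw.reverse

end Admissible

/-! ### The lower endpoint -/

/-- The lower endpoint of the gap. -/
noncomputable def gapBottom : ℝ := 4 * √210 / 19

lemma gapBottom_eq :
    gapBottom = 2 + cfPrepend [1, 1, 1] minTail + cfPrepend [2, 2, 1, 1, 1] minTail := by
  have hpos := minTail_pos
  have h111 : cfPrepend [1, 1, 1] minTail = (2 * √210 - 17) / 19 := by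
    simp only [cfPrepend, Nat.cast_one]
    field_simp
    rw [minTail]
    linear_combination (-8 / 29) * sq_sqrt_210
  have h22111 : cfPrepend [2, 2, 1, 1, 1] minTail = (2 * √210 - 21) / 19 := by
    change cfPrepend [2, 2] (cfPrepend [1, 1, 1] minTail) = _
    have hpos' : 0 < 2 * √210 - 17 := by linarith [sqrt_210_mem_Ioo.1]
    rw [h111]
    simp only [cfPrepend, Nat.cast_ofNat]
    field_simp
    linear_combination (-8) * sq_sqrt_210
  rw [h111, h22111, gapBottom]
  ring

lemma three_le_gapBottom : 3 ≤ gapBottom := by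
  have := sqrt_210_mem_Ioo.1
  rw [gapBottom, le_div_iff₀ (by norm_num)]
  linarith

namespace Admissible

variable {α : ℤ → ℕ} {k : ℤ}

lemma lambdaVal_le_of_2211 (h : Admissible α) (hw : OccursAt [2, 2, 1, 1] α k) :
    lambdaVal α (k + 1) ≤ gapBottom := by
  have hval : lambdaVal α (k + 1) =
      2 + cfPrepend [1, 1] (forwardTail α (k + 4)) + cfPrepend [2] (backwardTail α k) := by
    simpa using lambdaVal_eq_of_occursAt h.pos [2] 2 [1, 1] hw
  have hforward : cfPrepend [1, 1] (forwardTail α (k + 4)) ≤ cfPrepend [1, 1, 1] minTail :=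
    cfPrepend_le_cfPrepend_of_even (w := [1, 1]) (by decide) (forwardTail_pos h.pos _)
      (h.forwardTail_le _)
  have hback : cfPrepend [2] (backwardTail α k) ≤ cfPrepend [2, 2, 1, 1, 1] minTail :=
    cfPrepend_le_cfPrepend_of_odd (w := [2]) (x := cfPrepend [2, 1, 1, 1] minTail) (by decide)
      (cfPrepend_pos minTail_pos)
      (h.le_backwardTail_of_22 ((occursAt_append (u := [2, 2]) (v := [1, 1])).1 hw).1)
  rw [hval, gapBottom_eq]
  linarith

lemma lambdaVal_le_of_222 (h : Admissible α) (hw : OccursAt [2, 2, 2] α k) :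
    lambdaVal α (k + 1) ≤ gapBottom := by
  have hval : lambdaVal α (k + 1) =
      2 + cfPrepend [2] (forwardTail α (k + 3)) + cfPrepend [2] (backwardTail α k) := by
    simpa using lambdaVal_eq_of_occursAt h.pos [2] 2 [2] hw
  have hforward : cfPrepend [2] (forwardTail α (k + 3)) ≤ 1 / 2 :=
    cfPrepend_cons_le (by norm_num) (forwardTail_pos h.pos _)
  have hback : cfPrepend [2] (backwardTail α k) ≤ 1 / 2 :=
    cfPrepend_cons_le (by norm_num) (backwardTail_pos h.pos _)
  linarith [three_le_gapBottom]

lemma lambdaVal_le_of_one (h : Admissible α) (hk : α k = 1) : lambdaVal α k ≤ 5 / 2 := by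
  rw [lambdaVal_eq h.pos, hk, Nat.cast_one]
  linarith [h.forwardTail_le_three_quarters (k + 1), h.backwardTail_le_three_quarters k]

lemma lambdaVal_le_gapBottom (h : Admissible α) (hstart : ¬OccursAt [2, 1, 2] α k)
    (hend : ¬OccursAt [2, 1, 2] α (k - 2)) : lambdaVal α k ≤ gapBottom := by
  have hcases : α k = 1 ∨ OccursAt [2, 2, 2] α (k - 1) ∨ OccursAt [2, 2, 1, 1] α (k - 1) ∨
      OccursAt [1, 1, 2, 2] α (k - 2) := by
    have := h.digit (k - 2)
    have := h.digit (k - 1)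
    have := h.digit k
    have := h.digit (k + 1)
    have := h.digit (k + 2)
    have := h.not_121 (k - 1)
    grind [OccursAt]
  rcases hcases with hk | hw | hw | hw
  · linarith [h.lambdaVal_le_of_one hk, three_le_gapBottom]
  · simpa using h.lambdaVal_le_of_222 hw
  · simpa using h.lambdaVal_le_of_2211 hw
  · have hreverse : lambdaVal (reverseSeq α) (-(k - 2 + 4) + 1) ≤ gapBottom :=
      h.reverse.lambdaVal_le_of_2211 hw.reverse
    rwa [lambdaVal_reverseSeq h.pos, show -1 - (-(k - 2 + 4) + 1) = k by ring] at hreverse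

end Admissible

/-! ### The upper endpoint -/

/-- The upper endpoint of the gap. -/
noncomputable def gapTop : ℝ := (74613 + 4096 * √210) / 43449

lemma gapTop_mem_Ioo : gapTop ∈ Ioo 3.083 3.08338 := by
  obtain ⟨hlower, hupper⟩ := sqrt_210_mem_Ioo
  constructor
  · rw [gapTop, lt_div_iff₀ (by norm_num)]
    linarith
  · rw [gapTop, div_lt_iff₀ (by norm_num)]
    linarith

lemma gapBottom_lt_gapTop : gapBottom < gapTop := by
  have := sqrt_210_mem_Ioo.2
  refine lt_trans ?_ gapTop_mem_Ioo.1
  rw [gapBottom, div_lt_iff₀ (by norm_num)]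
  linarith

lemma cfPrepend_12212211_add_cfPrepend_211 {x : ℝ} (hx : 0 < x) :
    cfPrepend [1, 2, 2, 1, 2, 2, 1, 1] x + cfPrepend [2, 1, 1] x =
      (64 * x + 109) / (91 * x + 155) + (x + 2) / (3 * x + 5) := by
  simp only [cfPrepend, Nat.cast_ofNat, Nat.cast_one]
  congr 1
  · field_simp
    ring
  · field_simp
    ring

lemma cfPrepend_12212211_add_cfPrepend_211_anti {x y : ℝ} (hx : 0 < x) (hxy : x ≤ y) :
    cfPrepend [1, 2, 2, 1, 2, 2, 1, 1] y + cfPrepend [2, 1, 1] y ≤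
      cfPrepend [1, 2, 2, 1, 2, 2, 1, 1] x + cfPrepend [2, 1, 1] x := by
  have hy : 0 < y := hx.trans_le hxy
  rw [cfPrepend_12212211_add_cfPrepend_211 hx, cfPrepend_12212211_add_cfPrepend_211 hy]
  have hgain : (64 * y + 109) / (91 * y + 155) - (64 * x + 109) / (91 * x + 155) =
      (y - x) / ((91 * y + 155) * (91 * x + 155)) := by
    field_simp
    ring
  have hloss : (x + 2) / (3 * x + 5) - (y + 2) / (3 * y + 5) =
      (y - x) / ((3 * y + 5) * (3 * x + 5)) := by
    field_simp
    ring
  have hgain_le_loss : (y - x) / ((91 * y + 155) * (91 * x + 155)) ≤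
      (y - x) / ((3 * y + 5) * (3 * x + 5)) := by
    have := sub_nonneg.2 hxy
    gcongr <;> norm_num
  linarith

lemma gapTop_eq : gapTop =
    2 + cfPrepend [1, 2, 2, 1, 2, 2, 1, 1, 1] minTail + cfPrepend [2, 1, 1, 1] minTail := by
  have htail : cfPrepend [1] minTail = 29 / (2 * √210 + 12) := by
    rw [cfPrepend, cfPrepend, minTail, Nat.cast_one,
      show 1 + (2 * √210 - 17) / 29 = (2 * √210 + 12) / 29 by ring, one_div_div]
  have hsum := cfPrepend_12212211_add_cfPrepend_211 (cfPrepend_pos minTail_pos (w := [1]))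
  rw [htail] at hsum
  change gapTop = 2 + cfPrepend [1, 2, 2, 1, 2, 2, 1, 1] (cfPrepend [1] minTail) +
    cfPrepend [2, 1, 1] (cfPrepend [1] minTail)
  rw [htail, add_assoc, hsum, gapTop]
  field_simp
  linear_combination (12697600 * √210 + 184254680) * sq_sqrt_210

namespace Admissible

variable {α : ℤ → ℕ} {k : ℤ}

lemma gapTop_le_lambdaVal_of_112212211 (h : Admissible α)
    (hw : OccursAt [1, 1, 2, 2, 1, 2, 2, 1, 1] α k) : gapTop ≤ lambdaVal α (k + 3) := by
  have hval : lambdaVal α (k + 3) = 2 + cfPrepend [1, 2, 2, 1, 1] (forwardTail α (k + 9)) +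
      cfPrepend [2, 1, 1] (backwardTail α k) := by
    simpa using lambdaVal_eq_of_occursAt h.pos [1, 1, 2] 2 [1, 2, 2, 1, 1] hw
  have hforward := cfPrepend_le_cfPrepend_of_odd (w := [1, 2, 2, 1, 1]) (by decide)
    (forwardTail_pos h.pos _) (h.forwardTail_le_three_quarters (k + 9))
  have hback := cfPrepend_le_cfPrepend_of_odd (w := [2, 1, 1]) (by decide)
    (backwardTail_pos h.pos _) (h.backwardTail_le_three_quarters k)
  have hnum : cfPrepend [1, 2, 2, 1, 1] (3 / 4) + cfPrepend [2, 1, 1] (3 / 4) =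
      69 / 98 + 11 / 29 := by
    norm_num [cfPrepend]
  linarith [gapTop_mem_Ioo.2]

lemma gapTop_le_lambdaVal_of_forwardTail_le (h : Admissible α)
    (hw : OccursAt [1, 1, 2, 2, 1, 2, 2, 1, 2, 2, 1] α k)
    (hle : forwardTail α (k + 11) ≤ cfPrepend [1] (backwardTail α k)) :
    gapTop ≤ lambdaVal α (k + 3) := by
  have hval : lambdaVal α (k + 3) =
      2 + cfPrepend [1, 2, 2, 1, 2, 2, 1] (forwardTail α (k + 11)) +
        cfPrepend [2, 1, 1] (backwardTail α k) := by
    simpa using lambdaVal_eq_of_occursAt h.pos [1, 1, 2] 2 [1, 2, 2, 1, 2, 2, 1] hw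
  have hforward : cfPrepend [1, 2, 2, 1, 2, 2, 1, 1] (backwardTail α k) ≤
      cfPrepend [1, 2, 2, 1, 2, 2, 1] (forwardTail α (k + 11)) :=
    cfPrepend_le_cfPrepend_of_odd (w := [1, 2, 2, 1, 2, 2, 1]) (by decide)
      (forwardTail_pos h.pos _) hle
  calc gapTop = 2 + (cfPrepend [1, 2, 2, 1, 2, 2, 1, 1] (cfPrepend [1] minTail) +
        cfPrepend [2, 1, 1] (cfPrepend [1] minTail)) := by
        rw [gapTop_eq, ← add_assoc]
        rfl
    _ ≤ 2 + (cfPrepend [1, 2, 2, 1, 2, 2, 1, 1] (backwardTail α k) +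
        cfPrepend [2, 1, 1] (backwardTail α k)) := by
        gcongr 2 + ?_
        exact cfPrepend_12212211_add_cfPrepend_211_anti (backwardTail_pos h.pos _)
          (h.backwardTail_le k)
    _ ≤ lambdaVal α (k + 3) := by rw [hval]; linarith

/- Either the tail after the word is at most `[0; 1, …]` continued by the reversed past, or the word
continues to the palindrome `112212212211` and the same comparison holds for the reversed
sequence. -/
lemma exists_gapTop_le_lambdaVal_of_11221221221 (h : Admissible α)
    (hw : OccursAt [1, 1, 2, 2, 1, 2, 2, 1, 2, 2, 1] α k) : ∃ j, gapTop ≤ lambdaVal α j := by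
  rcases le_or_gt (forwardTail α (k + 11)) (cfPrepend [1] (backwardTail α k)) with hle | hlt
  · exact ⟨k + 3, h.gapTop_le_lambdaVal_of_forwardTail_le hw hle⟩
  have hnext : α (k + 11) = 1 := by
    refine (h.digit _).resolve_right fun htwo => ?_
    have hhalf : 1 / 2 < forwardTail α (k + 11) :=
      calc 1 / 2 = cfPrepend [1] 1 := by norm_num [cfPrepend]
        _ ≤ cfPrepend [1] (backwardTail α k) :=
          cfPrepend_le_cfPrepend_of_odd (by decide) (backwardTail_pos h.pos k)
            (by linarith [h.backwardTail_le_three_quarters k])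
        _ < forwardTail α (k + 11) := hlt
    exact hhalf.not_ge (h.forwardTail_le_half htwo)
  have hpalindrome : OccursAt [1, 1, 2, 2, 1, 2, 2, 1, 2, 2, 1, 1] α k :=
    (occursAt_append (v := [1])).2 ⟨hw, hnext, trivial⟩
  have hreverse : OccursAt [1, 1, 2, 2, 1, 2, 2, 1, 2, 2, 1] (reverseSeq α) (-(k + 12)) :=
    ((occursAt_append (v := [1])).1 hpalindrome.reverse).1
  have hforward :
      forwardTail (reverseSeq α) (-(k + 12) + 11) = cfPrepend [1] (backwardTail α k) := by
    rw [forwardTail_reverseSeq, show -(-(k + 12) + 11) = k + 1 by ring]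
    exact backwardTail_eq_cfPrepend h.pos (w := [1]) ⟨hw.1, trivial⟩
  have hback :
      cfPrepend [1] (backwardTail (reverseSeq α) (-(k + 12))) = forwardTail α (k + 11) := by
    rw [backwardTail_reverseSeq, neg_neg, show k + 12 = k + 11 + 1 by ring]
    exact (forwardTail_eq_cfPrepend h.pos (w := [1]) ⟨hnext, trivial⟩).symm
  have hvalue := h.reverse.gapTop_le_lambdaVal_of_forwardTail_le hreverse <| by
    rw [hforward, hback]
    exact hlt.le
  rw [lambdaVal_reverseSeq h.pos] at hvalue
  exact ⟨_, hvalue⟩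

lemma not_occursAt_11221221 (h : Admissible α) (hlt : ∀ j, lambdaVal α j < gapTop) (k : ℤ) :
    ¬OccursAt [1, 1, 2, 2, 1, 2, 2, 1] α k := fun hw => by
  rcases h.digit (k + 8) with hk | hk
  · exact (hlt _).not_ge (h.gapTop_le_lambdaVal_of_112212211
      ((occursAt_append (v := [1])).2 ⟨hw, hk, trivial⟩))
  · have hw' : OccursAt [1, 1, 2, 2, 1, 2, 2, 1, 2, 2, 1] α k := by
      have := h.occursAt_21221 (k := k + 6)
      grind (ematch := 12) [OccursAt]
    obtain ⟨j, hj⟩ := h.exists_gapTop_le_lambdaVal_of_11221221221 hw'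
    exact (hlt j).not_ge hj

lemma occursAt_12212 (h : Admissible α) (hw : OccursAt [2, 1, 2] α k) :
    OccursAt [1, 2, 2, 1, 2] α (k - 2) := by
  have hreverse : OccursAt [1, 2, 2, 1, 2] α (-(-(k + 3) + 5)) :=
    (h.reverse.occursAt_21221 hw.reverse).of_reverseSeq
  rwa [show -(-(k + 3) + 5) = k - 2 by ring] at hreverse

lemma occursAt_212_add_three (h : Admissible α) (hlt : ∀ j, lambdaVal α j < gapTop)
    (hw : OccursAt [2, 1, 2] α k) : OccursAt [2, 1, 2] α (k + 3) := by
  have hprev := h.occursAt_12212 hw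
  have hnext := h.occursAt_21221 hw
  have hreverse := h.reverse.not_occursAt_11221221
    (fun j => by rw [lambdaVal_reverseSeq h.pos]; exact hlt _)
  have hmirror : ¬OccursAt [1, 2, 2, 1, 2, 2, 1, 1] α (k - 2) := fun hw' => hreverse _ hw'.reverse
  have := h.digit (k + 5)
  grind (ematch := 12) [OccursAt]

lemma occursAt_212_sub_three (h : Admissible α) (hlt : ∀ j, lambdaVal α j < gapTop)
    (hw : OccursAt [2, 1, 2] α k) : OccursAt [2, 1, 2] α (k - 3) := by
  have hreverse : OccursAt [2, 1, 2] α (-(-(k + 3) + 3 + 3)) :=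
    (h.reverse.occursAt_212_add_three
      (fun j => by rw [lambdaVal_reverseSeq h.pos]; exact hlt _) hw.reverse).of_reverseSeq
  rwa [show -(-(k + 3) + 3 + 3) = k - 3 by ring] at hreverse

lemma occursAt_212_add_mul_three (h : Admissible α) (hlt : ∀ j, lambdaVal α j < gapTop)
    (hw : OccursAt [2, 1, 2] α k) (n : ℤ) : OccursAt [2, 1, 2] α (k + n * 3) := by
  induction n with
  | zero => simpa using hw
  | succ n ih => simpa [add_mul, add_assoc] using h.occursAt_212_add_three hlt ih
  | pred n ih => simpa [sub_mul, add_sub_assoc] using h.occursAt_212_sub_three hlt ih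

lemma exists_occursAt_212 (h : Admissible α) (hgt : gapBottom < lambdaVal α k) :
    ∃ j, OccursAt [2, 1, 2] α j := by
  by_contra! hnone
  exact hgt.not_ge (h.lambdaVal_le_gapBottom (hnone _) (hnone _))

end Admissible

/-! ### Realizing the three values -/

lemma mem_markovSpectrum_of_isGreatest {α : ℤ → ℕ} {x : ℝ} (hα : ∀ k, 0 < α k)
    (hx : IsGreatest (range (lambdaVal α)) x) : x ∈ markovSpectrum :=
  ⟨α, hα, ⟨x, hx.2⟩, hx.csSup_eq⟩

/-- The periodic sequence with period `212`, whose Markov value is the isolated point. -/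
def middleSeq (k : ℤ) : ℕ := if k % 3 = 1 then 1 else 2

/-- The periodic sequence with period `111222`, whose Markov value is the lower endpoint. -/
def bottomSeq (k : ℤ) : ℕ := if k % 6 < 3 then 1 else 2

/-- The symmetric sequence `⋯222111` `22122122` `111222⋯`, whose Markov value is the upper endpoint:
a finite piece of `middleSeq` continued on both sides by halves of `bottomSeq`. -/
def topSeq (k : ℤ) : ℕ :=
  if -4 ≤ k ∧ k < 4 then middleSeq k else bottomSeq (max k (-1 - k) - 4)

section MiddleSeq

lemma admissible_middleSeq : Admissible middleSeq where
  digit k := by grind [middleSeq]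
  not_121 k hw := by grind [OccursAt, middleSeq]
  not_22212 k hw := by grind [OccursAt, middleSeq]
  not_21222 k hw := by grind [OccursAt, middleSeq]

lemma periodic_middleSeq : Function.Periodic middleSeq 3 := fun k => by
  simp only [middleSeq, Int.add_emod_right]

lemma reverseSeq_middleSeq : reverseSeq middleSeq = middleSeq := by
  funext k
  grind [reverseSeq, middleSeq]

lemma eq_middleSeq_of_occursAt_212 {α : ℤ → ℕ} {c : ℤ}
    (hw : ∀ n, OccursAt [2, 1, 2] α (c + n * 3)) : (fun j => α (j + c)) = middleSeq := by
  funext j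
  have := hw (j / 3)
  have hj : j % 3 = 0 ∨ j % 3 = 1 ∨ j % 3 = 2 := by omega
  grind [OccursAt, middleSeq]

lemma sqrt_85_mem_Ioo : √85 ∈ Ioo 9.2 9.22 :=
  ⟨Real.lt_sqrt_of_sq_lt (by norm_num), (Real.sqrt_lt' (by norm_num)).2 (by norm_num)⟩

lemma forwardTail_middleSeq_zero : forwardTail middleSeq 0 = (√85 - 7) / 6 := by
  have hpos := forwardTail_pos admissible_middleSeq.pos 0
  have hfix := cfPrepend_forwardTail_of_periodic admissible_middleSeq.pos (w := [2, 1, 2]) (k := 0)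
    periodic_middleSeq ⟨rfl, rfl, rfl, trivial⟩
  have hquad : (6 * forwardTail middleSeq 0 + 7) ^ 2 = 85 := by
    simp only [cfPrepend, Nat.cast_ofNat, Nat.cast_one] at hfix
    field_simp at hfix
    linarith
  rw [← hquad, Real.sqrt_sq (by positivity)]
  ring

lemma lambdaVal_middleSeq_zero : lambdaVal middleSeq 0 = √85 / 3 := by
  have hpos : 0 < √85 - 7 := by linarith [sqrt_85_mem_Ioo.1]
  have hdigit : (middleSeq 0 : ℝ) + forwardTail middleSeq 1 = 6 / (√85 - 7) := by
    rw [← one_div_div, ← forwardTail_middleSeq_zero, forwardTail_eq admissible_middleSeq.pos 0,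
      one_div_one_div, zero_add]
  rw [lambdaVal_eq admissible_middleSeq.pos, backwardTail_eq_of_symmetric reverseSeq_middleSeq,
    zero_add, neg_zero, hdigit, forwardTail_middleSeq_zero]
  field_simp
  linarith [Real.sq_sqrt (show (0 : ℝ) ≤ 85 by norm_num)]

lemma isGreatest_range_lambdaVal_middleSeq :
    IsGreatest (range (lambdaVal middleSeq)) (√85 / 3) := by
  refine ⟨⟨0, lambdaVal_middleSeq_zero⟩, forall_mem_range.2 fun k => ?_⟩
  have hone : lambdaVal middleSeq 1 ≤ √85 / 3 := by
    linarith [admissible_middleSeq.lambdaVal_le_of_one (k := 1) rfl, sqrt_85_mem_Ioo.1]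
  have htwo : lambdaVal middleSeq 2 = √85 / 3 := by
    rw [← lambdaVal_middleSeq_zero, ← periodic_lambdaVal periodic_middleSeq.neg 0,
      ← lambdaVal_reflect admissible_middleSeq.pos reverseSeq_middleSeq 2]
    norm_num
  have hmod : lambdaVal middleSeq k = lambdaVal middleSeq (k % 3) := by
    rw [← (periodic_lambdaVal periodic_middleSeq).int_mul (k / 3) (k % 3), Int.cast_id,
      Int.emod_add_ediv_mul]
  have hk : k % 3 = 0 ∨ k % 3 = 1 ∨ k % 3 = 2 := by omega
  rw [hmod]
  rcases hk with hk | hk | hk <;> rw [hk]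
  · exact lambdaVal_middleSeq_zero.le
  · exact hone
  · exact htwo.le

end MiddleSeq

section BottomSeq

lemma admissible_bottomSeq : Admissible bottomSeq where
  digit k := by grind [bottomSeq]
  not_121 k hw := by grind [OccursAt, bottomSeq]
  not_22212 k hw := by grind [OccursAt, bottomSeq]
  not_21222 k hw := by grind [OccursAt, bottomSeq]

lemma periodic_bottomSeq : Function.Periodic bottomSeq 6 := fun k => by
  simp only [bottomSeq, Int.add_emod_right]

lemma reverseSeq_bottomSeq (k : ℤ) : reverseSeq bottomSeq k = bottomSeq (k + 3) := by
  grind [reverseSeq, bottomSeq]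

lemma forwardTail_bottomSeq_three : forwardTail bottomSeq 3 = minTail :=
  eq_minTail_of_cfPrepend_eq (forwardTail_pos admissible_bottomSeq.pos _) <|
    cfPrepend_forwardTail_of_periodic admissible_bottomSeq.pos periodic_bottomSeq
      ⟨rfl, rfl, rfl, rfl, rfl, rfl, trivial⟩

lemma lambdaVal_bottomSeq_five : lambdaVal bottomSeq 5 = gapBottom := by
  have hforward : forwardTail bottomSeq 9 = minTail := by
    rw [← forwardTail_bottomSeq_three]
    exact periodic_forwardTail periodic_bottomSeq 3
  have hback : backwardTail bottomSeq 0 = minTail := by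
    rw [← forwardTail_bottomSeq_three, ← neg_zero, ← forwardTail_reverseSeq]
    exact forwardTail_congr fun n => by rw [reverseSeq_bottomSeq, zero_add, add_comm]
  have hval : lambdaVal bottomSeq 5 = 2 + cfPrepend [1, 1, 1] (forwardTail bottomSeq 9) +
      cfPrepend [2, 2, 1, 1, 1] (backwardTail bottomSeq 0) :=
    lambdaVal_eq_of_occursAt admissible_bottomSeq.pos (k := 0) [1, 1, 1, 2, 2] 2 [1, 1, 1]
      ⟨rfl, rfl, rfl, rfl, rfl, rfl, rfl, rfl, rfl, trivial⟩
  rw [hval, hforward, hback, gapBottom_eq]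

lemma isGreatest_range_lambdaVal_bottomSeq :
    IsGreatest (range (lambdaVal bottomSeq)) gapBottom := by
  have hnone (k : ℤ) : ¬OccursAt [2, 1, 2] bottomSeq k := by grind [OccursAt, bottomSeq]
  exact ⟨⟨5, lambdaVal_bottomSeq_five⟩, forall_mem_range.2 fun k =>
    admissible_bottomSeq.lambdaVal_le_gapBottom (hnone _) (hnone _)⟩

end BottomSeq

section TopSeq

lemma admissible_topSeq : Admissible topSeq where
  digit k := by grind [topSeq, middleSeq, bottomSeq]
  not_121 k hw := by grind [OccursAt, topSeq, middleSeq, bottomSeq]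
  not_22212 k hw := by grind [OccursAt, topSeq, middleSeq, bottomSeq]
  not_21222 k hw := by grind [OccursAt, topSeq, middleSeq, bottomSeq]

lemma eq_of_occursAt_212_topSeq {k : ℤ} (hw : OccursAt [2, 1, 2] topSeq k) :
    k = 0 ∨ k = -3 := by
  grind [OccursAt, topSeq, middleSeq, bottomSeq]

lemma reverseSeq_topSeq : reverseSeq topSeq = topSeq := by
  funext k
  grind [reverseSeq, topSeq, middleSeq]

lemma lambdaVal_topSeq_two : lambdaVal topSeq 2 = gapTop := by
  have hforward : forwardTail topSeq 7 = minTail := by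
    rw [← forwardTail_bottomSeq_three]
    exact forwardTail_congr fun n => by grind [topSeq]
  have hback : backwardTail topSeq (-7) = minTail := by
    rw [backwardTail_eq_of_symmetric reverseSeq_topSeq, neg_neg, hforward]
  have hval : lambdaVal topSeq 2 = 2 + cfPrepend [2, 1, 1, 1] (forwardTail topSeq 7) +
      cfPrepend [1, 2, 2, 1, 2, 2, 1, 1, 1] (backwardTail topSeq (-7)) := by
    simpa using lambdaVal_eq_of_occursAt admissible_topSeq.pos (k := -7)
      [1, 1, 1, 2, 2, 1, 2, 2, 1] 2 [2, 1, 1, 1]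
      (by simp [OccursAt, topSeq, middleSeq, bottomSeq])
  rw [hval, hforward, hback, gapTop_eq]
  ring

lemma lambdaVal_topSeq_zero_le : lambdaVal topSeq 0 ≤ gapTop := by
  have hval : lambdaVal topSeq 0 = 2 + cfPrepend [1, 2, 2, 1] (forwardTail topSeq 5) +
      cfPrepend [2, 1, 2, 2] (backwardTail topSeq (-4)) := by
    simpa using lambdaVal_eq_of_occursAt admissible_topSeq.pos (k := -4) [2, 2, 1, 2] 2 [1, 2, 2, 1]
      (by simp [OccursAt, topSeq, middleSeq, bottomSeq])
  have hforward := cfPrepend_le_cfPrepend_of_even (w := [1, 2, 2, 1]) (by decide)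
    (forwardTail_pos admissible_topSeq.pos _) (admissible_topSeq.forwardTail_le_three_quarters 5)
  have hback := cfPrepend_le_cfPrepend_of_even (w := [2, 1, 2, 2]) (by decide)
    (backwardTail_pos admissible_topSeq.pos _)
    (admissible_topSeq.backwardTail_le_three_quarters (-4))
  have hnum : cfPrepend [1, 2, 2, 1] (3 / 4) + cfPrepend [2, 1, 2, 2] (3 / 4) =
      43 / 61 + 37 / 100 := by
    norm_num [cfPrepend]
  linarith [gapTop_mem_Ioo.1]

lemma isGreatest_range_lambdaVal_topSeq : IsGreatest (range (lambdaVal topSeq)) gapTop := by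
  refine ⟨⟨2, lambdaVal_topSeq_two⟩, forall_mem_range.2 fun k => ?_⟩
  have hreflect := lambdaVal_reflect admissible_topSeq.pos reverseSeq_topSeq
  have hcases : (k = 2 ∨ k = -1 - 2 ∨ k = 0 ∨ k = -1 - 0) ∨
      ¬OccursAt [2, 1, 2] topSeq k ∧ ¬OccursAt [2, 1, 2] topSeq (k - 2) := by
    have := eq_of_occursAt_212_topSeq (k := k)
    have := eq_of_occursAt_212_topSeq (k := k - 2)
    grind
  rcases hcases with (rfl | rfl | rfl | rfl) | ⟨hstart, hend⟩
  · exact lambdaVal_topSeq_two.le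
  · exact (hreflect 2).trans_le lambdaVal_topSeq_two.le
  · exact lambdaVal_topSeq_zero_le
  · exact (hreflect 0).trans_le lambdaVal_topSeq_zero_le
  · exact (admissible_topSeq.lambdaVal_le_gapBottom hstart hend).trans gapBottom_lt_gapTop.le

end TopSeq

/-! ### The gap -/

lemma sqrt_85_div_three_mem_Ioo : √85 / 3 ∈ Ioo gapBottom gapTop := by
  have hbottom : gapBottom < 3.06 := by
    rw [gapBottom, div_lt_iff₀ (by norm_num)]
    linarith [sqrt_210_mem_Ioo.2]
  constructor
  · linarith [sqrt_85_mem_Ioo.1]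
  · linarith [sqrt_85_mem_Ioo.2, gapTop_mem_Ioo.1]

lemma markovValue_eq_of_mem_Ioo {α : ℤ → ℕ} (hα : ∀ k, 0 < α k)
    (hbdd : BddAbove (range (lambdaVal α))) (hgap : markovValue α ∈ Ioo gapBottom gapTop) :
    markovValue α = √85 / 3 := by
  have hlt (k : ℤ) : lambdaVal α k < gapTop := (le_ciSup hbdd k).trans_lt hgap.2
  have hadm : Admissible α := admissible_of_lambdaVal_lt hα fun k =>
    (hlt k).trans (gapTop_mem_Ioo.2.trans (by norm_num))
  obtain ⟨k, hk⟩ := exists_lt_of_lt_ciSup hgap.1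
  obtain ⟨c, hc⟩ := hadm.exists_occursAt_212 hk
  rw [← markovValue_shift α c,
    eq_middleSeq_of_occursAt_212 (hadm.occursAt_212_add_mul_three hlt hc)]
  exact isGreatest_range_lambdaVal_middleSeq.csSup_eq

/-- The intersection of the Markov spectrum with the open interval consists of
exactly one (hence isolated) point, and both endpoints belong to the Markov
spectrum. -/
theorem markov_gap_6 :
    markovSpectrum ∩ Ioo (4 * Real.sqrt 210 / 19) ((74613 + 4096 * Real.sqrt 210) / 43449) = {(Real.sqrt 85 / 3 : ℝ)} ∧
    (4 * Real.sqrt 210 / 19) ∈ markovSpectrum ∧ ((74613 + 4096 * Real.sqrt 210) / 43449) ∈ markovSpectrum := by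
  refine ⟨Subset.antisymm ?_ (singleton_subset_iff.2 ⟨?_, sqrt_85_div_three_mem_Ioo⟩), ?_, ?_⟩
  · rintro _ ⟨⟨α, hα, hbdd, rfl⟩, hgap⟩
    exact markovValue_eq_of_mem_Ioo hα hbdd hgap
  · exact mem_markovSpectrum_of_isGreatest admissible_middleSeq.pos
      isGreatest_range_lambdaVal_middleSeq
  · exact mem_markovSpectrum_of_isGreatest admissible_bottomSeq.pos
      isGreatest_range_lambdaVal_bottomSeq
  · exact mem_markovSpectrum_of_isGreatest admissible_topSeq.pos isGreatest_range_lambdaVal_topSeq
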